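/- At the fixed point p₁ with m̄² = 5/4 and ḡ = −81/(64π²), the Jacobian matrix of the Ward-constrained melonic flow (β_m, β_g) with respect to the variables (m̄², ḡ) has two real strictly negative eigenvalues; equivalently, its trace is strictly negative, its determinant is strictly positive, and the square of its trace is at least four times its determinant (numerically the critical exponents are (θ₁, θ₂) ≈ (−4.4, −0.3)), so p₁ has two relevant (attractive toward the UV) directions. -/

import Mathlib

open Real

/-- `Ω(ḡ, m̄²) := (1 + m̄²)² − π²ḡ`. -/
noncomputable def Omega (g m : ℝ) : ℝ := (1 + m) ^ 2 - π ^ 2 * g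

/-- `Ω′(ḡ, m̄²) := π²ḡ(1+m̄²)³(1 − 8/(3(1+m̄²)²)) + 6π⁴ḡ²`. -/
noncomputable def OmegaP (g m : ℝ) : ℝ :=
  π ^ 2 * g * (1 + m) ^ 3 * (1 - 8 / (3 * (1 + m) ^ 2)) + 6 * π ^ 4 * g ^ 2

/-- The Ward-constrained melonic anomalous dimension
`η(ḡ, m̄²) := 4π²ḡ((1+m̄²)³ + 9π²ḡ) / ((1+m̄²)⁵ − Ω′(ḡ, m̄²))`. -/
noncomputable def eta (g m : ℝ) : ℝ :=
  4 * π ^ 2 * g * ((1 + m) ^ 3 + 9 * π ^ 2 * g) / ((1 + m) ^ 5 - OmegaP g m)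

/-- `β_m = −(2+η)m̄² − 10π²ḡ(1+η/6)/(1+m̄²)²` for the Ward-constrained melonic flow. -/
noncomputable def betaM (g m : ℝ) : ℝ :=
  -(2 + eta g m) * m - 10 * π ^ 2 * g * (1 + eta g m / 6) / (1 + m) ^ 2

/-- `β_g = −ηḡΩ/(1+m̄²)² + 2π²ḡ²β_m/(1+m̄²)³` for the Ward-constrained melonic flow. -/
noncomputable def betaG (g m : ℝ) : ℝ :=
  -eta g m * g * Omega g m / (1 + m) ^ 2 + 2 * π ^ 2 * g ^ 2 * betaM g m / (1 + m) ^ 3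

/-- The mass coordinate of the fixed point `p₁`. -/
noncomputable def m1 : ℝ := 5 / 4

/-- The coupling coordinate of the fixed point `p₁`. -/
noncomputable def g1 : ℝ := -81 / (64 * π ^ 2)

/-- Entry `∂β_m/∂m̄²` of the Jacobian of the Ward-constrained flow at `p₁`. -/
noncomputable def J11 : ℝ := deriv (fun m => betaM g1 m) m1

/-- Entry `∂β_m/∂ḡ` of the Jacobian of the Ward-constrained flow at `p₁`. -/
noncomputable def J12 : ℝ := deriv (fun g => betaM g m1) g1

/-- Entry `∂β_g/∂m̄²` of the Jacobian of the Ward-constrained flow at `p₁`. -/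
noncomputable def J21 : ℝ := deriv (fun m => betaG g1 m) m1

/-- Entry `∂β_g/∂ḡ` of the Jacobian of the Ward-constrained flow at `p₁`. -/
noncomputable def J22 : ℝ := deriv (fun g => betaG g m1) g1

/-- Rescaled anomalous dimension, `u = π²g`. -/
noncomputable def etaU (u m : ℝ) : ℝ :=
  4 * u * ((1 + m) ^ 3 + 9 * u) /
    ((1 + m) ^ 5 - (u * (1 + m) ^ 3 * (1 - 8 / (3 * (1 + m) ^ 2)) + 6 * u ^ 2))

noncomputable def bmU (e u m : ℝ) : ℝ :=
  -(2 + e) * m - 10 * u * (1 + e / 6) / (1 + m) ^ 2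

noncomputable def bgU (e b u m : ℝ) : ℝ :=
  -e * u * ((1 + m) ^ 2 - u) / (1 + m) ^ 2 + 2 * u ^ 2 * b / (1 + m) ^ 3

lemma eta_eq (g m : ℝ) : eta g m = etaU (π ^ 2 * g) m := by
  unfold eta etaU OmegaP
  congr 1 <;> ring

lemma betaM_eq (g m : ℝ) : betaM g m = bmU (etaU (π ^ 2 * g) m) (π ^ 2 * g) m := by
  unfold betaM bmU
  rw [eta_eq]
  ring

lemma betaG_eq (g m : ℝ) : betaG g m =
    bgU (etaU (π ^ 2 * g) m) (bmU (etaU (π ^ 2 * g) m) (π ^ 2 * g) m) (π ^ 2 * g) m / π ^ 2 := by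
  unfold betaG bgU Omega
  rw [eta_eq, betaM_eq]
  have : π ≠ 0 := Real.pi_ne_zero
  field_simp

lemma u1 : π ^ 2 * g1 = -81 / 64 := by
  unfold g1
  have : π ≠ 0 := Real.pi_ne_zero
  field_simp

lemma etaU_val : etaU (-81 / 64) (5 / 4) = 0 := by
  unfold etaU; norm_num

/-- Chain rule for the rescaled functions along a curve through the fixed point. -/
lemma etaU_deriv {U M : ℝ → ℝ} {u' m' t : ℝ} (hU : HasDerivAt U u' t) (hM : HasDerivAt M m' t)
    (hu : U t = -81 / 64) (hm : M t = 5 / 4) :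
    HasDerivAt (fun s => etaU (U s) (M s)) (-1296 / 925 * m' - 768 / 925 * u') t := by
  unfold etaU
  have h1 := hM.const_add 1
  have hN := (hU.const_mul 4).mul ((h1.pow 3).add (hU.const_mul 9))
  have hq := ((hasDerivAt_const t (8 : ℝ)).div ((h1.pow 2).const_mul 3)
    (by simp [hm]; norm_num)).const_sub 1
  have hD := (h1.pow 5).sub (((hU.mul (h1.pow 3)).mul hq).add ((hU.pow 2).const_mul 6))
  have h := hN.div hD (by simp [hu, hm]; norm_num)
  refine h.congr_deriv ?_
  simp [hu, hm]
  ring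

lemma bmU_deriv {E U M : ℝ → ℝ} {e' u' m' t : ℝ} (hE : HasDerivAt E e' t)
    (hU : HasDerivAt U u' t) (hM : HasDerivAt M m' t)
    (he : E t = 0) (hu : U t = -81 / 64) (hm : M t = 5 / 4) :
    HasDerivAt (fun s => bmU (E s) (U s) (M s))
      (-5 / 4 * e' - 2 * m' + 5 / 12 * e' - 160 / 81 * u' - 20 / 9 * m') t := by
  unfold bmU
  have h1 := hM.const_add 1
  have h := ((hE.const_add 2).neg.mul hM).sub
    (((hU.const_mul 10).mul ((hE.div_const 6).const_add 1)).div (h1.pow 2)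
      (by simp [hm]; norm_num))
  refine h.congr_deriv ?_
  simp [hu, hm, he]
  ring

lemma bgU_deriv {E B U M : ℝ → ℝ} {e' b' u' m' t : ℝ} (hE : HasDerivAt E e' t)
    (hB : HasDerivAt B b' t) (hU : HasDerivAt U u' t) (hM : HasDerivAt M m' t)
    (he : E t = 0) (hb : B t = 0) (hu : U t = -81 / 64) (hm : M t = 5 / 4) :
    HasDerivAt (fun s => bgU (E s) (B s) (U s) (M s))
      (405 / 256 * e' + 9 / 32 * b') t := by
  unfold bgU
  have h1 := hM.const_add 1
  have h := (((hE.neg.mul hU).mul ((h1.pow 2).sub hU)).div (h1.pow 2)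
      (by simp [hm]; norm_num)).add
    ((((hU.pow 2).const_mul 2).mul hB).div (h1.pow 3) (by simp [hm]; norm_num))
  refine h.congr_deriv ?_
  simp [hu, hm, he, hb]
  ring

lemma bm_val : bmU (etaU (-81 / 64) (5 / 4)) (-81 / 64) (5 / 4) = 0 := by
  rw [etaU_val]; unfold bmU; norm_num

lemma J11_eq : J11 = -5086 / 1665 := by
  unfold J11
  simp only [betaM_eq, u1]
  have hU := hasDerivAt_const m1 (-81 / 64 : ℝ)
  have hM := hasDerivAt_id' m1
  have hE := etaU_deriv hU hM rfl rfl
  have hB := bmU_deriv hE hU hM etaU_val rfl rfl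
  rw [hB.deriv]; norm_num

lemma J21_eq : J21 = -569 / 185 / π ^ 2 := by
  unfold J21
  simp only [betaG_eq, u1]
  have hU := hasDerivAt_const m1 (-81 / 64 : ℝ)
  have hM := hasDerivAt_id' m1
  have hE := etaU_deriv hU hM rfl rfl
  have hB := bmU_deriv hE hU hM etaU_val rfl rfl
  have hG := bgU_deriv hE hB hU hM etaU_val bm_val rfl rfl
  rw [(hG.div_const (π ^ 2)).deriv]; norm_num

lemma J12_eq : J12 = -19232 / 14985 * π ^ 2 := by
  unfold J12
  simp only [betaM_eq]
  have hU := (hasDerivAt_id' g1).const_mul (π ^ 2)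
  have hM := hasDerivAt_const g1 m1
  have hE := etaU_deriv hU hM u1 rfl
  have hB := bmU_deriv hE hU hM (by rw [u1]; exact etaU_val) u1 rfl
  rw [hB.deriv]; ring

lemma J22_eq : J22 = -2788 / 1665 := by
  unfold J22
  simp only [betaG_eq]
  have hU := (hasDerivAt_id' g1).const_mul (π ^ 2)
  have hM := hasDerivAt_const g1 m1
  have hE := etaU_deriv hU hM u1 rfl
  have hB := bmU_deriv hE hU hM (by rw [u1]; exact etaU_val) u1 rfl
  have hG := bgU_deriv hE hB hU hM (by rw [u1]; exact etaU_val)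
    (by rw [u1]; exact bm_val) u1 rfl
  rw [(hG.div_const (π ^ 2)).deriv]
  have : π ≠ 0 := Real.pi_ne_zero
  rw [div_eq_iff (pow_ne_zero 2 this)]
  ring

/-- At the fixed point `p₁` the Jacobian matrix of the Ward-constrained melonic flow has
two real strictly negative eigenvalues: its trace is strictly negative, its determinant
is strictly positive, and the square of its trace is at least four times its determinant
(numerically `(θ₁, θ₂) ≈ (−4.4, −0.3)`), so `p₁` has two relevant directions. -/
theorem p1_two_relevant_directions :
    J11 + J22 < 0 ∧ 0 < J11 * J22 - J12 * J21 ∧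
      4 * (J11 * J22 - J12 * J21) ≤ (J11 + J22) ^ 2 := by
  have hp : J12 * J21 = (-19232 / 14985) * (-569 / 185) := by
    rw [J12_eq, J21_eq]
    have : π ≠ 0 := Real.pi_ne_zero
    field_simp
  rw [hp, J11_eq, J22_eq]
  norm_num
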